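/- For i = 1,2 let Λᵢ be an integral domain and commutative ℂ-algebra, Ŵᵢ a group of ℂ-algebra automorphisms of Λᵢ, and Wᵢ ⊆ Ŵᵢ a finite subgroup, with symmetrizing idempotents eᵢ = (1/#Wᵢ) Σ_{w∈Wᵢ} w ∈ Lᵢ#Ŵᵢ. Assume Λ = Λ₁ ⊗_ℂ Λ₂ is an integral domain, let Ŵ = Ŵ₁ × Ŵ₂ act componentwise, let ψ: (L₁#Ŵ₁) ⊗_ℂ (L₂#Ŵ₂) → L#Ŵ be the canonical embedding, and let e = ψ(e₁ ⊗ e₂) = (1/#(W₁×W₂)) Σ_{w∈W₁×W₂} w. Then ψ restricts to an injective ℂ-algebra homomorphism from (e₁·𝓕_{Λ₁}·e₁) ⊗_ℂ (e₂·𝓕_{Λ₂}·e₂) into the spherical subalgebra e·𝓕_Λ·e; i.e., the tensor product of the standard Galois orders embeds into the standard Galois order of the tensored data. -/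

import Mathlib

/-!
Statement 12: In the tensor-product setting, with finite subgroups Wᵢ ⊆ Ŵᵢ and
symmetrizing idempotents eᵢ = (1/#Wᵢ) Σ_{w∈Wᵢ} w and e = ψ(e₁ ⊗ e₂) =
(1/#(W₁×W₂)) Σ_{w∈W₁×W₂} w, the canonical embedding ψ restricts to an injective
ℂ-algebra homomorphism (e₁·𝓕_{Λ₁}·e₁) ⊗_ℂ (e₂·𝓕_{Λ₂}·e₂) → e·𝓕_Λ·e.
-/

set_option synthInstance.maxHeartbeats 1000000
set_option maxHeartbeats 1000000

open scoped TensorProduct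

noncomputable section

/-- `gen f w` is the ℂ-linear endomorphism `m_f ∘ w` of `L`. -/
def gen {L : Type*} [Field L] [Algebra ℂ L] (f : L) (w : L ≃ₐ[ℂ] L) : Module.End ℂ L :=
  (LinearMap.mulLeft ℂ f) ∘ₗ (w.toLinearMap)

/-- The skew monoid ring `L # W` realized inside `End_ℂ(L)`. -/
def skew {L : Type*} [Field L] [Algebra ℂ L] (W : Submonoid (L ≃ₐ[ℂ] L)) :
    Subalgebra ℂ (Module.End ℂ L) :=
  Algebra.adjoin ℂ { X | ∃ (f : L) (w : L ≃ₐ[ℂ] L), w ∈ W ∧ X = gen f w }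

lemma gen_mem_skew {L : Type*} [Field L] [Algebra ℂ L] {W : Submonoid (L ≃ₐ[ℂ] L)}
    (f : L) {w : L ≃ₐ[ℂ] L} (hw : w ∈ W) : gen f w ∈ skew W :=
  Algebra.subset_adjoin ⟨f, w, hw, rfl⟩

/-- The standard flag order `𝓕_Λ = {X ∈ L#W : X(Λ) ⊆ Λ}`. -/
def flag {L : Type*} [Field L] [Algebra ℂ L] (Λ : Subalgebra ℂ L)
    (W : Submonoid (L ≃ₐ[ℂ] L)) : Set (Module.End ℂ L) :=
  { X | X ∈ skew W ∧ ∀ a ∈ Λ, X a ∈ Λ }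

/-- The symmetrizing idempotent `(1/#s) Σ_{w ∈ s} w` of a finite set `s` of automorphisms. -/
def symIdem {L : Type*} [Field L] [Algebra ℂ L] (s : Finset (L ≃ₐ[ℂ] L)) : Module.End ℂ L :=
  (s.card : ℂ)⁻¹ • ∑ w ∈ s, gen (1 : L) w

lemma symIdem_mem_skew {L : Type*} [Field L] [Algebra ℂ L] {W : Submonoid (L ≃ₐ[ℂ] L)}
    {s : Finset (L ≃ₐ[ℂ] L)} (hs : ∀ w ∈ s, w ∈ W) : symIdem s ∈ skew W :=
  Subalgebra.smul_mem _ (Subalgebra.sum_mem _ fun w hw => gen_mem_skew 1 (hs w hw)) _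

/-- `Λ = Λ₁ ⊗ Λ₂`, realized inside `L` as the subalgebra generated by `ι₁(Λ₁) ∪ ι₂(Λ₂)`. -/
def tensorSub {L₁ L₂ L : Type*} [Field L₁] [Algebra ℂ L₁] [Field L₂] [Algebra ℂ L₂]
    [Field L] [Algebra ℂ L] (Λ₁ : Subalgebra ℂ L₁) (Λ₂ : Subalgebra ℂ L₂)
    (ι₁ : L₁ →ₐ[ℂ] L) (ι₂ : L₂ →ₐ[ℂ] L) : Subalgebra ℂ L :=
  Algebra.adjoin ℂ ((ι₁ '' (Λ₁ : Set L₁)) ∪ (ι₂ '' (Λ₂ : Set L₂)))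

/-!
`ψ` extends, along the injection `ι : L₁ ⊗ L₂ → L`, the action of `(L₁#Ŵ₁) ⊗ (L₂#Ŵ₂)` on `L₁ ⊗ L₂`:
by additivity it is enough to check this on `(m_a ∘ w₁) ⊗ (m_b ∘ w₂)`. That action is faithful
because `Hom(M, P) ⊗ Hom(N, Q) → Hom(M ⊗ N, P ⊗ Q)` is injective over a field, so `ψ` is injective.
If `X` and `Y` preserve `Λ₁` and `Λ₂`, then `X ⊗ Y` preserves `Λ₁ ⊗ Λ₂`, so `ψ` carries
`𝓕_{Λ₁} ⊗ 𝓕_{Λ₂}` into `𝓕_Λ`; multiplicativity of `ψ` passes this on to the spherical subalgebras.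
-/

section TensorOfHoms

variable (R M N P Q : Type*) [CommSemiring R] [AddCommMonoid M] [Module R M]
  [AddCommMonoid N] [Module R N] [AddCommMonoid P] [Module R P] [AddCommMonoid Q] [Module R Q]

lemma rTensorHomToHomRTensor_injective [Module.Free R Q] :
    Function.Injective (TensorProduct.rTensorHomToHomRTensor (.id R) M P Q) := by
  classical
  let b := Module.Free.chooseBasis R Q
  have coord_apply (t : (M →ₗ[R] P) ⊗[R] Q) (m : M) (i) :
      TensorProduct.equivFinsuppOfBasisRight b
          (TensorProduct.rTensorHomToHomRTensor (.id R) M P Q t m) i =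
        TensorProduct.equivFinsuppOfBasisRight b t i m := by
    induction t <;> simp_all
  intro t t' h
  apply (TensorProduct.equivFinsuppOfBasisRight b).injective
  ext i m
  rw [← coord_apply, ← coord_apply, h]

lemma lTensorHomToHomLTensor_injective [Module.Free R P] :
    Function.Injective (TensorProduct.lTensorHomToHomLTensor (.id R) N P Q) := by
  classical
  let b := Module.Free.chooseBasis R P
  have coord_apply (t : P ⊗[R] (N →ₗ[R] Q)) (n : N) (i) :
      TensorProduct.equivFinsuppOfBasisLeft b
          (TensorProduct.lTensorHomToHomLTensor (.id R) N P Q t n) i =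
        TensorProduct.equivFinsuppOfBasisLeft b t i n := by
    induction t <;> simp_all
  intro t t' h
  apply (TensorProduct.equivFinsuppOfBasisLeft b).injective
  ext i n
  rw [← coord_apply, ← coord_apply, h]

lemma homTensorHomMap_injective [Module.Free R P] [Module.Free R (N →ₗ[R] Q)] :
    Function.Injective (TensorProduct.homTensorHomMap (.id R) M N P Q) := by
  have apply_tmul (t : (M →ₗ[R] P) ⊗[R] (N →ₗ[R] Q)) (m : M) (n : N) :
      TensorProduct.homTensorHomMap (.id R) M N P Q t (m ⊗ₜ n) =
        TensorProduct.lTensorHomToHomLTensor (.id R) N P Q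
          (TensorProduct.rTensorHomToHomRTensor (.id R) M P (N →ₗ[R] Q) t m) n := by
    induction t <;> simp_all
  intro t t' h
  apply rTensorHomToHomRTensor_injective
  ext m
  apply lTensorHomToHomLTensor_injective
  ext n
  rw [← apply_tmul, ← apply_tmul, h]

end TensorOfHoms

section SkewMonoidRing

variable {L : Type*} [Field L] [Algebra ℂ L]

lemma gen_apply (f : L) (w : L ≃ₐ[ℂ] L) (x : L) : gen f w x = f * w x := rfl

lemma gen_mul_gen (f g : L) (v w : L ≃ₐ[ℂ] L) : gen f v * gen g w = gen (f * v g) (v * w) := by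
  ext x
  simp [gen_apply, mul_assoc]

lemma gen_zero (w : L ≃ₐ[ℂ] L) : gen (0 : L) w = 0 := by
  ext x
  simp [gen_apply]

lemma gen_algebraMap_one (c : ℂ) :
    gen (algebraMap ℂ L c) 1 = algebraMap ℂ (Module.End ℂ L) c := by
  ext x
  simp [gen_apply, Algebra.smul_def]

/-- The multiplicative monoid of the operators `m_f ∘ w` with `f ∈ L` and `w ∈ W`. -/
def genSubmonoid (W : Submonoid (L ≃ₐ[ℂ] L)) : Submonoid (Module.End ℂ L) where
  carrier := {X | ∃ (f : L) (w : L ≃ₐ[ℂ] L), w ∈ W ∧ X = gen f w}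
  one_mem' := ⟨1, 1, W.one_mem, by simpa using (gen_algebraMap_one (L := L) 1).symm⟩
  mul_mem' := by
    rintro _ _ ⟨f, v, hv, rfl⟩ ⟨g, w, hw, rfl⟩
    exact ⟨_, _, W.mul_mem hv hw, gen_mul_gen f g v w⟩

variable {W : Submonoid (L ≃ₐ[ℂ] L)}

lemma mem_closure_genSubmonoid_of_mem_skew {X : Module.End ℂ L} (hX : X ∈ skew W) :
    X ∈ AddSubmonoid.closure (genSubmonoid W : Set (Module.End ℂ L)) := by
  induction hX using Algebra.adjoin_induction with
  | mem X hX => exact AddSubmonoid.subset_closure hX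
  | algebraMap c =>
    exact AddSubmonoid.subset_closure ⟨_, 1, W.one_mem, (gen_algebraMap_one c).symm⟩
  | add X Y _ _ hX hY => exact add_mem hX hY
  | mul X Y _ _ hX hY => exact MulMemClass.mul_mem_add_closure hX hY

lemma skew_induction {p : skew W → Prop}
    (gen : ∀ (f : L) (w : L ≃ₐ[ℂ] L) (hw : w ∈ W), p ⟨gen f w, gen_mem_skew f hw⟩)
    (add : ∀ X Y, p X → p Y → p (X + Y)) (X : skew W) : p X := by
  obtain ⟨X, hX⟩ := X
  suffices h : ∃ hX : X ∈ skew W, p ⟨X, hX⟩ from h.2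
  replace hX := mem_closure_genSubmonoid_of_mem_skew hX
  induction hX using AddSubmonoid.closure_induction with
  | mem X hX =>
    obtain ⟨f, w, hw, rfl⟩ := hX
    exact ⟨gen_mem_skew f hw, gen f w hw⟩
  | zero => simpa only [gen_zero] using
      (⟨gen_mem_skew 0 W.one_mem, gen 0 1 W.one_mem⟩ : ∃ hX, p ⟨_root_.gen 0 1, hX⟩)
  | add X Y _ _ hX hY => exact ⟨add_mem hX.1 hY.1, add _ _ hX.2 hY.2⟩

lemma mk_symIdem_eq_smul_sum {s : Finset (L ≃ₐ[ℂ] L)} (hs : ∀ w ∈ s, w ∈ W) :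
    (⟨symIdem s, symIdem_mem_skew hs⟩ : skew W) =
      (s.card : ℂ)⁻¹ • ∑ w : s, ⟨gen 1 w.1, gen_mem_skew 1 (hs w.1 w.2)⟩ := by
  apply Subtype.ext
  simp only [symIdem, Subalgebra.coe_smul, AddSubmonoidClass.coe_finsetSum]
  rw [Finset.sum_coe_sort s fun w => gen (1 : L) w]

end SkewMonoidRing

section SphericalSubalgebra

variable {L : Type*} [Field L] [Algebra ℂ L]

/-- The standard flag order as a linear subspace of `End_ℂ(L)`. -/
def flagSubmodule (Λ : Subalgebra ℂ L) (W : Submonoid (L ≃ₐ[ℂ] L)) :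
    Submodule ℂ (Module.End ℂ L) where
  carrier := flag Λ W
  zero_mem' := ⟨zero_mem _, fun _ _ => Λ.zero_mem⟩
  add_mem' hX hY := ⟨add_mem hX.1 hY.1, fun a ha => Λ.add_mem (hX.2 a ha) (hY.2 a ha)⟩
  smul_mem' c _ hX := ⟨Subalgebra.smul_mem _ hX.1 c, fun a ha => Λ.smul_mem (hX.2 a ha) c⟩

/-- The spherical subalgebra `e·𝓕_Λ·e`, defined for an arbitrary operator `e`; it is an algebra,
with unit `e`, when `e` is an idempotent of `𝓕_Λ`. -/
def spherical (Λ : Subalgebra ℂ L) (W : Submonoid (L ≃ₐ[ℂ] L)) (e : Module.End ℂ L) :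
    Set (Module.End ℂ L) :=
  {y | ∃ Z ∈ flag Λ W, y = e * Z * e}

lemma spherical_eq_map_flagSubmodule (Λ : Subalgebra ℂ L) (W : Submonoid (L ≃ₐ[ℂ] L))
    (e : Module.End ℂ L) :
    spherical Λ W e = (flagSubmodule Λ W).map (LinearMap.mulLeftRight ℂ (e, e)) :=
  Set.ext fun _ => exists_congr fun _ => and_congr_right fun _ => eq_comm

end SphericalSubalgebra

section TensorProductData

variable {L₁ L₂ L : Type*} [Field L₁] [Algebra ℂ L₁] [Field L₂] [Algebra ℂ L₂]
  [Field L] [Algebra ℂ L]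

/-- The tensor product `e₁𝓕_{Λ₁}e₁ ⊗ e₂𝓕_{Λ₂}e₂` of two spherical subalgebras, as the subspace of
`(L₁#W₁) ⊗ (L₂#W₂)` spanned by the tensors of their elements. -/
def sphericalTensor (Λ₁ : Subalgebra ℂ L₁) (Λ₂ : Subalgebra ℂ L₂)
    (W₁ : Submonoid (L₁ ≃ₐ[ℂ] L₁)) (W₂ : Submonoid (L₂ ≃ₐ[ℂ] L₂))
    (e₁ : Module.End ℂ L₁) (e₂ : Module.End ℂ L₂) : Submodule ℂ (skew W₁ ⊗[ℂ] skew W₂) :=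
  Submodule.span ℂ {t | ∃ (X₁ : skew W₁) (X₂ : skew W₂),
    (X₁ : Module.End ℂ L₁) ∈ spherical Λ₁ W₁ e₁ ∧
    (X₂ : Module.End ℂ L₂) ∈ spherical Λ₂ W₂ e₂ ∧ t = X₁ ⊗ₜ[ℂ] X₂}

lemma skewTensor_induction {W₁ : Submonoid (L₁ ≃ₐ[ℂ] L₁)} {W₂ : Submonoid (L₂ ≃ₐ[ℂ] L₂)}
    {p : skew W₁ ⊗[ℂ] skew W₂ → Prop}
    (gen_tmul_gen : ∀ (a : L₁) (b : L₂) (w₁ : L₁ ≃ₐ[ℂ] L₁) (w₂ : L₂ ≃ₐ[ℂ] L₂)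
      (h₁ : w₁ ∈ W₁) (h₂ : w₂ ∈ W₂),
      p ((⟨gen a w₁, gen_mem_skew a h₁⟩ : skew W₁) ⊗ₜ (⟨gen b w₂, gen_mem_skew b h₂⟩ : skew W₂)))
    (add : ∀ s t, p s → p t → p (s + t)) (t : skew W₁ ⊗[ℂ] skew W₂) : p t := by
  have tmul (X : skew W₁) (Y : skew W₂) : p (X ⊗ₜ Y) := by
    induction X using skew_induction with
    | gen a w₁ h₁ =>
      induction Y using skew_induction with
      | gen b w₂ h₂ => exact gen_tmul_gen a b w₁ w₂ h₁ h₂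
      | add Y Y' hY hY' => simpa only [TensorProduct.tmul_add] using add _ _ hY hY'
    | add X X' hX hX' => simpa only [TensorProduct.add_tmul] using add _ _ hX hX'
  induction t with
  | zero => simpa only [TensorProduct.tmul_zero] using tmul 0 0
  | add s t hs ht => exact add s t hs ht
  | tmul X Y => exact tmul X Y

/-- The action of `(L₁#W₁) ⊗ (L₂#W₂)` on `L₁ ⊗ L₂`. -/
def skewTensorAction (W₁ : Submonoid (L₁ ≃ₐ[ℂ] L₁)) (W₂ : Submonoid (L₂ ≃ₐ[ℂ] L₂)) :
    skew W₁ ⊗[ℂ] skew W₂ →ₗ[ℂ] Module.End ℂ (L₁ ⊗[ℂ] L₂) :=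
  TensorProduct.map₂ (skew W₁).val.toLinearMap (skew W₂).val.toLinearMap

lemma skewTensorAction_tmul {W₁ : Submonoid (L₁ ≃ₐ[ℂ] L₁)} {W₂ : Submonoid (L₂ ≃ₐ[ℂ] L₂)}
    (X : skew W₁) (Y : skew W₂) :
    skewTensorAction W₁ W₂ (X ⊗ₜ Y) =
      TensorProduct.map (X : Module.End ℂ L₁) (Y : Module.End ℂ L₂) := rfl

lemma skewTensorAction_injective (W₁ : Submonoid (L₁ ≃ₐ[ℂ] L₁)) (W₂ : Submonoid (L₂ ≃ₐ[ℂ] L₂)) :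
    Function.Injective (skewTensorAction W₁ W₂) :=
  have : Module.Free ℂ (skew W₂) := Module.Free.of_divisionRing ℂ (skew W₂)
  (homTensorHomMap_injective ℂ L₁ L₂ L₁ L₂).comp
    (TensorProduct.map_injective_of_flat_flat _ _ Subtype.val_injective Subtype.val_injective)

lemma tensorSub_eq_map_sup_map (Λ₁ : Subalgebra ℂ L₁) (Λ₂ : Subalgebra ℂ L₂)
    (ι₁ : L₁ →ₐ[ℂ] L) (ι₂ : L₂ →ₐ[ℂ] L) :
    tensorSub Λ₁ Λ₂ ι₁ ι₂ = Λ₁.map ι₁ ⊔ Λ₂.map ι₂ := by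
  rw [tensorSub, Algebra.adjoin_union, ← Subalgebra.coe_map, ← Subalgebra.coe_map,
    Algebra.adjoin_eq, Algebra.adjoin_eq]

lemma map_mul_map_mem_tensorSub {Λ₁ : Subalgebra ℂ L₁} {Λ₂ : Subalgebra ℂ L₂}
    (ι₁ : L₁ →ₐ[ℂ] L) (ι₂ : L₂ →ₐ[ℂ] L) {f : L₁} {g : L₂} (hf : f ∈ Λ₁) (hg : g ∈ Λ₂) :
    ι₁ f * ι₂ g ∈ tensorSub Λ₁ Λ₂ ι₁ ι₂ :=
  mul_mem (Algebra.subset_adjoin (Or.inl ⟨f, hf, rfl⟩))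
    (Algebra.subset_adjoin (Or.inr ⟨g, hg, rfl⟩))

lemma tensorSub_induction {Λ₁ : Subalgebra ℂ L₁} {Λ₂ : Subalgebra ℂ L₂}
    {ι₁ : L₁ →ₐ[ℂ] L} {ι₂ : L₂ →ₐ[ℂ] L} {p : L → Prop}
    (map_mul_map : ∀ f ∈ Λ₁, ∀ g ∈ Λ₂, p (ι₁ f * ι₂ g)) (add : ∀ x y, p x → p y → p (x + y))
    {x : L} (hx : x ∈ tensorSub Λ₁ Λ₂ ι₁ ι₂) : p x := by
  rw [tensorSub_eq_map_sup_map, ← Subalgebra.mem_toSubmodule, ← Subalgebra.mul_toSubmodule] at hx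
  refine Submodule.mul_induction_on hx ?_ add
  rintro _ ⟨f, hf, rfl⟩ _ ⟨g, hg, rfl⟩
  exact map_mul_map f hf g hg

section TensorEmbedding

variable {W₁ : Submonoid (L₁ ≃ₐ[ℂ] L₁)} {W₂ : Submonoid (L₂ ≃ₐ[ℂ] L₂)}
  {ι₁ : L₁ →ₐ[ℂ] L} {ι₂ : L₂ →ₐ[ℂ] L}
  {ext : ((L₁ ≃ₐ[ℂ] L₁) × (L₂ ≃ₐ[ℂ] L₂)) →* (L ≃ₐ[ℂ] L)}
  {ψ : (skew W₁ ⊗[ℂ] skew W₂) →ₐ[ℂ] Module.End ℂ L}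
  (hψ : ∀ (a : L₁) (b : L₂) (w₁ : L₁ ≃ₐ[ℂ] L₁) (w₂ : L₂ ≃ₐ[ℂ] L₂)
      (h₁ : w₁ ∈ W₁) (h₂ : w₂ ∈ W₂),
    ψ (⟨gen a w₁, gen_mem_skew a h₁⟩ ⊗ₜ[ℂ] ⟨gen b w₂, gen_mem_skew b h₂⟩)
      = gen (ι₁ a * ι₂ b) (ext (w₁, w₂)))

include hψ

lemma psi_symIdem_tmul_symIdem {s₁ : Finset (L₁ ≃ₐ[ℂ] L₁)} {s₂ : Finset (L₂ ≃ₐ[ℂ] L₂)}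
    (hs₁ : ∀ w ∈ s₁, w ∈ W₁) (hs₂ : ∀ w ∈ s₂, w ∈ W₂) :
    ψ ((⟨symIdem s₁, symIdem_mem_skew hs₁⟩ : skew W₁) ⊗ₜ[ℂ]
        (⟨symIdem s₂, symIdem_mem_skew hs₂⟩ : skew W₂)) =
      ((s₁.card * s₂.card : ℂ))⁻¹ • ∑ v ∈ s₁, ∑ u ∈ s₂, gen (1 : L) (ext (v, u)) := by
  have sum_eq : ∑ v : s₁, ∑ u : s₂,
      ψ ((⟨gen 1 v.1, gen_mem_skew 1 (hs₁ v.1 v.2)⟩ : skew W₁) ⊗ₜ[ℂ]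
        (⟨gen 1 u.1, gen_mem_skew 1 (hs₂ u.1 u.2)⟩ : skew W₂)) =
      ∑ v ∈ s₁, ∑ u ∈ s₂, gen (1 : L) (ext (v, u)) := by
    simp only [hψ _ _ _ _ (hs₁ _ (Subtype.prop _)) (hs₂ _ (Subtype.prop _)), map_one, mul_one]
    simp only [← Finset.sum_coe_sort s₁, ← Finset.sum_coe_sort s₂]
  rw [mk_symIdem_eq_smul_sum hs₁, mk_symIdem_eq_smul_sum hs₂, TensorProduct.smul_tmul_smul,
    map_smul, ← mul_inv, ← sum_eq]
  rw [TensorProduct.sum_tmul, map_sum]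
  simp only [TensorProduct.tmul_sum, map_sum]

lemma psi_mem_skew (t : skew W₁ ⊗[ℂ] skew W₂) :
    ψ t ∈ skew (Submonoid.map ext (W₁.prod W₂)) := by
  induction t using skewTensor_induction with
  | gen_tmul_gen a b w₁ w₂ h₁ h₂ =>
    rw [hψ _ _ _ _ h₁ h₂]
    exact gen_mem_skew _ ⟨(w₁, w₂), ⟨h₁, h₂⟩, rfl⟩
  | add s t hs ht => exact map_add ψ s t ▸ add_mem hs ht

variable (hext : ∀ (p : (L₁ ≃ₐ[ℂ] L₁) × (L₂ ≃ₐ[ℂ] L₂)) (f : L₁) (g : L₂),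
  ext p (ι₁ f * ι₂ g) = ι₁ (p.1 f) * ι₂ (p.2 g))

include hext

lemma psi_apply_productMap (t : skew W₁ ⊗[ℂ] skew W₂) (z : L₁ ⊗[ℂ] L₂) :
    ψ t (Algebra.TensorProduct.productMap ι₁ ι₂ z) =
      Algebra.TensorProduct.productMap ι₁ ι₂ (skewTensorAction W₁ W₂ t z) := by
  induction t using skewTensor_induction with
  | gen_tmul_gen a b w₁ w₂ h₁ h₂ =>
    induction z with
    | zero => simp only [map_zero]
    | add y z hy hz => simp only [map_add, hy, hz]
    | tmul f g =>
      simp only [hψ _ _ _ _ h₁ h₂, skewTensorAction_tmul, TensorProduct.map_tmul, gen_apply, hext,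
        Algebra.TensorProduct.productMap_apply_tmul, map_mul]
      exact mul_mul_mul_comm _ _ _ _
  | add s t hs ht => simp only [map_add, LinearMap.add_apply, hs, ht]

lemma psi_tmul_apply_mul (X : skew W₁) (Y : skew W₂) (f : L₁) (g : L₂) :
    ψ (X ⊗ₜ Y) (ι₁ f * ι₂ g) =
      ι₁ ((X : Module.End ℂ L₁) f) * ι₂ ((Y : Module.End ℂ L₂) g) := by
  simpa only [skewTensorAction_tmul, TensorProduct.map_tmul,
    Algebra.TensorProduct.productMap_apply_tmul] using
    psi_apply_productMap hψ hext (X ⊗ₜ Y) (f ⊗ₜ g)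

lemma psi_injective (hι : Function.Injective (Algebra.TensorProduct.productMap ι₁ ι₂)) :
    Function.Injective ψ := by
  intro t t' h
  refine skewTensorAction_injective W₁ W₂ (LinearMap.ext fun z => hι ?_)
  rw [← psi_apply_productMap hψ hext, ← psi_apply_productMap hψ hext, h]

variable {Λ₁ : Subalgebra ℂ L₁} {Λ₂ : Subalgebra ℂ L₂}

lemma psi_tmul_mem_flag {X : skew W₁} {Y : skew W₂}
    (hX : (X : Module.End ℂ L₁) ∈ flag Λ₁ W₁) (hY : (Y : Module.End ℂ L₂) ∈ flag Λ₂ W₂) :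
    ψ (X ⊗ₜ Y) ∈ flag (tensorSub Λ₁ Λ₂ ι₁ ι₂) (Submonoid.map ext (W₁.prod W₂)) := by
  refine ⟨psi_mem_skew hψ _, fun x hx => ?_⟩
  refine tensorSub_induction (p := fun x => ψ (X ⊗ₜ Y) x ∈ tensorSub Λ₁ Λ₂ ι₁ ι₂) ?_ ?_ hx
  · intro f hf g hg
    rw [psi_tmul_apply_mul hψ hext]
    exact map_mul_map_mem_tensorSub ι₁ ι₂ (hX.2 f hf) (hY.2 g hg)
  · intro x y hx hy
    exact map_add (ψ (X ⊗ₜ Y)) x y ▸ add_mem hx hy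

lemma psi_tmul_mem_spherical {e₁ X : skew W₁} {e₂ Y : skew W₂}
    (hX : (X : Module.End ℂ L₁) ∈ spherical Λ₁ W₁ e₁)
    (hY : (Y : Module.End ℂ L₂) ∈ spherical Λ₂ W₂ e₂) :
    ψ (X ⊗ₜ Y) ∈ spherical (tensorSub Λ₁ Λ₂ ι₁ ι₂) (Submonoid.map ext (W₁.prod W₂))
      (ψ (e₁ ⊗ₜ e₂)) := by
  obtain ⟨Z₁, hZ₁, hX⟩ := hX
  obtain ⟨Z₂, hZ₂, hY⟩ := hY
  lift Z₁ to skew W₁ using hZ₁.1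
  lift Z₂ to skew W₂ using hZ₂.1
  obtain rfl : X = e₁ * Z₁ * e₁ := Subtype.ext hX
  obtain rfl : Y = e₂ * Z₂ * e₂ := Subtype.ext hY
  exact ⟨ψ (Z₁ ⊗ₜ Z₂), psi_tmul_mem_flag hψ hext hZ₁ hZ₂, by
    simp only [← map_mul, Algebra.TensorProduct.tmul_mul_tmul]⟩

lemma psi_mem_spherical_of_mem_sphericalTensor {e₁ : skew W₁} {e₂ : skew W₂}
    {t : skew W₁ ⊗[ℂ] skew W₂} (ht : t ∈ sphericalTensor Λ₁ Λ₂ W₁ W₂ e₁ e₂) :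
    ψ t ∈ spherical (tensorSub Λ₁ Λ₂ ι₁ ι₂) (Submonoid.map ext (W₁.prod W₂))
      (ψ (e₁ ⊗ₜ e₂)) := by
  rw [spherical_eq_map_flagSubmodule, SetLike.mem_coe]
  induction ht using Submodule.span_induction with
  | mem t ht =>
    obtain ⟨X, Y, hX, hY, rfl⟩ := ht
    rw [← SetLike.mem_coe, ← spherical_eq_map_flagSubmodule]
    exact psi_tmul_mem_spherical hψ hext hX hY
  | zero => exact map_zero ψ ▸ zero_mem _
  | add s t _ _ hs ht => exact map_add ψ s t ▸ add_mem hs ht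
  | smul c t _ ht => exact map_smul ψ c t ▸ Submodule.smul_mem _ c ht

end TensorEmbedding

end TensorProductData

theorem tensor_embedding_of_standard_Galois_orders_general
    {L₁ L₂ L : Type*} [Field L₁] [Algebra ℂ L₁] [Field L₂] [Algebra ℂ L₂]
    [Field L] [Algebra ℂ L] (Λ₁ : Subalgebra ℂ L₁) (Λ₂ : Subalgebra ℂ L₂)
    (W₁ : Submonoid (L₁ ≃ₐ[ℂ] L₁)) (W₂ : Submonoid (L₂ ≃ₐ[ℂ] L₂))
    (s₁ : Finset (L₁ ≃ₐ[ℂ] L₁)) (hs₁ : ∀ w ∈ s₁, w ∈ W₁)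
    (s₂ : Finset (L₂ ≃ₐ[ℂ] L₂)) (hs₂ : ∀ w ∈ s₂, w ∈ W₂)
    (ι₁ : L₁ →ₐ[ℂ] L) (ι₂ : L₂ →ₐ[ℂ] L)
    (hι : Function.Injective (Algebra.TensorProduct.productMap ι₁ ι₂))
    (ext : ((L₁ ≃ₐ[ℂ] L₁) × (L₂ ≃ₐ[ℂ] L₂)) →* (L ≃ₐ[ℂ] L))
    (hext : ∀ (p : (L₁ ≃ₐ[ℂ] L₁) × (L₂ ≃ₐ[ℂ] L₂)) (f : L₁) (g : L₂),
      ext p (ι₁ f * ι₂ g) = ι₁ (p.1 f) * ι₂ (p.2 g))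
    (ψ : (skew W₁ ⊗[ℂ] skew W₂) →ₐ[ℂ] Module.End ℂ L)
    (hψ : ∀ (a : L₁) (b : L₂) (w₁ : L₁ ≃ₐ[ℂ] L₁) (w₂ : L₂ ≃ₐ[ℂ] L₂)
        (h₁ : w₁ ∈ W₁) (h₂ : w₂ ∈ W₂),
      ψ (⟨gen a w₁, gen_mem_skew a h₁⟩ ⊗ₜ[ℂ] ⟨gen b w₂, gen_mem_skew b h₂⟩)
        = gen (ι₁ a * ι₂ b) (ext (w₁, w₂))) :
    ψ ((⟨symIdem s₁, symIdem_mem_skew hs₁⟩ : skew W₁) ⊗ₜ[ℂ]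
        (⟨symIdem s₂, symIdem_mem_skew hs₂⟩ : skew W₂))
      = ((s₁.card * s₂.card : ℂ))⁻¹ • ∑ v ∈ s₁, ∑ u ∈ s₂, gen (1 : L) (ext (v, u)) ∧
    (∀ t ∈ sphericalTensor Λ₁ Λ₂ W₁ W₂ (symIdem s₁) (symIdem s₂),
      ψ t ∈ spherical (tensorSub Λ₁ Λ₂ ι₁ ι₂) (Submonoid.map ext (W₁.prod W₂))
        (((s₁.card * s₂.card : ℂ))⁻¹ • ∑ v ∈ s₁, ∑ u ∈ s₂, gen (1 : L) (ext (v, u)))) ∧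
    Function.Injective ψ := by
  have he := psi_symIdem_tmul_symIdem hψ hs₁ hs₂
  refine ⟨he, fun t ht => ?_, psi_injective hψ hext hι⟩
  rw [← he]
  exact psi_mem_spherical_of_mem_sphericalTensor hψ hext ht

theorem tensor_embedding_of_standard_Galois_orders
    {L₁ L₂ L : Type*} [Field L₁] [Algebra ℂ L₁] [Field L₂] [Algebra ℂ L₂]
    [Field L] [Algebra ℂ L]
    (Λ₁ : Subalgebra ℂ L₁) (Λ₂ : Subalgebra ℂ L₂)
    [IsFractionRing Λ₁ L₁] [IsFractionRing Λ₂ L₂]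
    (Wg₁ : Subgroup (L₁ ≃ₐ[ℂ] L₁)) (Wg₂ : Subgroup (L₂ ≃ₐ[ℂ] L₂))
    (hW₁ : ∀ w ∈ Wg₁, ∀ x : L₁, x ∈ Λ₁ ↔ w x ∈ Λ₁)
    (hW₂ : ∀ w ∈ Wg₂, ∀ x : L₂, x ∈ Λ₂ ↔ w x ∈ Λ₂)
    -- finite subgroups V₁ ⊆ Ŵ₁, V₂ ⊆ Ŵ₂, enumerated by s₁, s₂
    (V₁ : Subgroup (L₁ ≃ₐ[ℂ] L₁)) (hV₁ : V₁ ≤ Wg₁)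
    (V₂ : Subgroup (L₂ ≃ₐ[ℂ] L₂)) (hV₂ : V₂ ≤ Wg₂)
    (s₁ : Finset (L₁ ≃ₐ[ℂ] L₁)) (hs₁ : ∀ w, w ∈ s₁ ↔ w ∈ V₁)
    (s₂ : Finset (L₂ ≃ₐ[ℂ] L₂)) (hs₂ : ∀ w, w ∈ s₂ ↔ w ∈ V₂)
    (ι₁ : L₁ →ₐ[ℂ] L) (ι₂ : L₂ →ₐ[ℂ] L)
    (hι : Function.Injective (Algebra.TensorProduct.productMap ι₁ ι₂))
    (hfrac : ∀ x : L, ∃ a ∈ tensorSub Λ₁ Λ₂ ι₁ ι₂, ∃ b ∈ tensorSub Λ₁ Λ₂ ι₁ ι₂,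
      b ≠ 0 ∧ x = a / b)
    (ext : ((L₁ ≃ₐ[ℂ] L₁) × (L₂ ≃ₐ[ℂ] L₂)) →* (L ≃ₐ[ℂ] L))
    (hext : ∀ (p : (L₁ ≃ₐ[ℂ] L₁) × (L₂ ≃ₐ[ℂ] L₂)) (f : L₁) (g : L₂),
      ext p (ι₁ f * ι₂ g) = ι₁ (p.1 f) * ι₂ (p.2 g))
    -- the canonical embedding ψ
    (ψ : (↥(skew Wg₁.toSubmonoid) ⊗[ℂ] ↥(skew Wg₂.toSubmonoid)) →ₐ[ℂ] Module.End ℂ L)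
    (hψ : ∀ (a : L₁) (b : L₂) (w₁ : L₁ ≃ₐ[ℂ] L₁) (w₂ : L₂ ≃ₐ[ℂ] L₂)
        (h₁ : w₁ ∈ Wg₁) (h₂ : w₂ ∈ Wg₂),
      ψ (⟨gen a w₁, gen_mem_skew a h₁⟩ ⊗ₜ[ℂ] ⟨gen b w₂, gen_mem_skew b h₂⟩)
        = gen (ι₁ a * ι₂ b) (ext (w₁, w₂))) :
    -- e = ψ(e₁ ⊗ e₂) = (1/#(W₁ × W₂)) Σ_{w ∈ W₁ × W₂} w :
    (ψ ((⟨symIdem s₁, symIdem_mem_skew fun w hw => hV₁ ((hs₁ w).1 hw)⟩ : skew Wg₁.toSubmonoid)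
        ⊗ₜ[ℂ] (⟨symIdem s₂, symIdem_mem_skew fun w hw => hV₂ ((hs₂ w).1 hw)⟩ : skew Wg₂.toSubmonoid))
      = ((s₁.card * s₂.card : ℂ))⁻¹ • ∑ v ∈ s₁, ∑ u ∈ s₂, gen (1 : L) (ext (v, u))) ∧
    -- ψ maps the span of e₁𝓕₁e₁ ⊗ e₂𝓕₂e₂ into e·𝓕_Λ·e :
    (∀ t ∈ Submodule.span ℂ
        { t : ↥(skew Wg₁.toSubmonoid) ⊗[ℂ] ↥(skew Wg₂.toSubmonoid) |
          ∃ (X₁ : skew Wg₁.toSubmonoid) (X₂ : skew Wg₂.toSubmonoid),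
            ((X₁ : Module.End ℂ L₁) ∈
              {y | ∃ Z ∈ flag Λ₁ Wg₁.toSubmonoid, y = symIdem s₁ * Z * symIdem s₁}) ∧
            ((X₂ : Module.End ℂ L₂) ∈
              {y | ∃ Z ∈ flag Λ₂ Wg₂.toSubmonoid, y = symIdem s₂ * Z * symIdem s₂}) ∧
            t = X₁ ⊗ₜ[ℂ] X₂ },
      ∃ Z ∈ flag (tensorSub Λ₁ Λ₂ ι₁ ι₂)
          (Submonoid.map ext (Wg₁.toSubmonoid.prod Wg₂.toSubmonoid)),
        ψ t = (((s₁.card * s₂.card : ℂ))⁻¹ • ∑ v ∈ s₁, ∑ u ∈ s₂, gen (1 : L) (ext (v, u))) * Z *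
          (((s₁.card * s₂.card : ℂ))⁻¹ • ∑ v ∈ s₁, ∑ u ∈ s₂, gen (1 : L) (ext (v, u)))) ∧
    -- and is injective there:
    (∀ t₁ ∈ Submodule.span ℂ
        { t : ↥(skew Wg₁.toSubmonoid) ⊗[ℂ] ↥(skew Wg₂.toSubmonoid) |
          ∃ (X₁ : skew Wg₁.toSubmonoid) (X₂ : skew Wg₂.toSubmonoid),
            ((X₁ : Module.End ℂ L₁) ∈
              {y | ∃ Z ∈ flag Λ₁ Wg₁.toSubmonoid, y = symIdem s₁ * Z * symIdem s₁}) ∧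
            ((X₂ : Module.End ℂ L₂) ∈
              {y | ∃ Z ∈ flag Λ₂ Wg₂.toSubmonoid, y = symIdem s₂ * Z * symIdem s₂}) ∧
            t = X₁ ⊗ₜ[ℂ] X₂ },
      ∀ t₂ ∈ Submodule.span ℂ
        { t : ↥(skew Wg₁.toSubmonoid) ⊗[ℂ] ↥(skew Wg₂.toSubmonoid) |
          ∃ (X₁ : skew Wg₁.toSubmonoid) (X₂ : skew Wg₂.toSubmonoid),
            ((X₁ : Module.End ℂ L₁) ∈
              {y | ∃ Z ∈ flag Λ₁ Wg₁.toSubmonoid, y = symIdem s₁ * Z * symIdem s₁}) ∧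
            ((X₂ : Module.End ℂ L₂) ∈
              {y | ∃ Z ∈ flag Λ₂ Wg₂.toSubmonoid, y = symIdem s₂ * Z * symIdem s₂}) ∧
            t = X₁ ⊗ₜ[ℂ] X₂ },
      ψ t₁ = ψ t₂ → t₁ = t₂) := by
  obtain ⟨he, hmem, hinj⟩ := tensor_embedding_of_standard_Galois_orders_general Λ₁ Λ₂
    Wg₁.toSubmonoid Wg₂.toSubmonoid s₁ (fun w hw => hV₁ ((hs₁ w).1 hw))
    s₂ (fun w hw => hV₂ ((hs₂ w).1 hw)) ι₁ ι₂ hι ext hext ψ hψ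
  exact ⟨he, hmem, fun _ _ _ _ h => hinj h⟩
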